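/- Let Ω ⊂ ℝ^{n+1} be a bounded convex open set with smooth boundary. Suppose u ∈ C¹(Ω̄) has a single critical point p ∈ Ω, is twice differentiable in Ω \ {p}, satisfies the level set mean curvature flow equation -|Du| div(Du/|Du|) = 1 in Ω \ {p}, and u ≡ u₀ on ∂Ω. Then w := √(2(u - u₀)) is concave on Ω. -/

import Mathlib

open Bornology

/-!
For `0 < α < 1/2` the power `w = (u - u₀) ^ α` solves `-|Dw| div(Dw/|Dw|) = 1/ψ(w)`, where `ψ` is
a convex increasing power. At an interior maximum of Korevaar's function
`a w(x) + b w(y) - w(a x + b y)` the gradients of `w` at the three points agree, and the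
second-order condition in directions tangent to the level sets, with speeds `ψ(w(x))` and
`ψ(w(y))`, gives `a ψ(w(x)) + b ψ(w(y)) ≤ ψ(w(a x + b y))`; hence the maximum is nonpositive.
Comparison with paraboloids shows that `u - u₀` grows at least like the squared distance to the
boundary. As `2 α < 1`, the graph of `w` is therefore vertical at the boundary, which keeps positive
maxima in the interior. For `α = 1/2` the slope at the boundary may be finite, so that case is
reached by letting `α` increase to `1/2`.
-/

section

open Filter Set Topology Metric
open scoped Gradient Laplacian InnerProductSpace

theorem nonpos_of_isLocalMax_of_hasDerivAt {φ φ' : ℝ → ℝ} {x m : ℝ} (hmax : IsLocalMax φ x)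
    (hφ : ∀ᶠ t in 𝓝 x, HasDerivAt φ (φ' t) t) (hφ' : HasDerivAt φ' m x) : m ≤ 0 := by
  have hderiv : deriv φ =ᶠ[𝓝 x] φ' := hφ.mono fun t ht => ht.deriv
  have hderiv₂ : deriv (deriv φ) x = m := hderiv.deriv_eq.trans hφ'.deriv
  by_contra! hm
  have hmin : IsLocalMin φ x :=
    isLocalMin_of_deriv_deriv_pos (hderiv₂ ▸ hm) hmax.deriv_eq_zero
      hφ.self_of_nhds.continuousAt
  have hconst : φ =ᶠ[𝓝 x] fun _ => φ x := by
    filter_upwards [hmax, hmin] with t h₁ h₂ using le_antisymm h₁ h₂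
  have : deriv (deriv φ) x = 0 := by simpa using hconst.deriv.deriv_eq
  exact hm.ne (this.symm.trans hderiv₂)

section SecondOrder

variable {E : Type*} [NormedAddCommGroup E] [NormedSpace ℝ E] {f : E → ℝ} {x : E}

/-- Twice differentiability of `f` at `x`. The first clause is there because `fderiv` takes the
value `0` where `f` is not differentiable. -/
def TwiceDifferentiableAt (f : E → ℝ) (x : E) : Prop :=
  (∀ᶠ y in 𝓝 x, DifferentiableAt ℝ f y) ∧ DifferentiableAt ℝ (fderiv ℝ f) x

theorem hasDerivAt_add_smul (x v : E) (t : ℝ) : HasDerivAt (fun s : ℝ => x + s • v) v t := by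
  simpa using ((hasDerivAt_id t).smul_const v).const_add x

theorem tendsto_add_smul_zero (x v : E) : Tendsto (fun t : ℝ => x + t • v) (𝓝 0) (𝓝 x) := by
  simpa using (hasDerivAt_add_smul x v 0).continuousAt.tendsto

theorem isLocalMin_comp_add_smul (hmin : IsLocalMin f x) (v : E) :
    IsLocalMin (fun t : ℝ => f (x + t • v)) 0 :=
  IsLocalMin.comp_continuous (f := f) (g := fun t : ℝ => x + t • v) (by simpa using hmin)
    (by fun_prop)

theorem TwiceDifferentiableAt.eventually_hasDerivAt_line (hf : TwiceDifferentiableAt f x) (v : E) :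
    ∀ᶠ t in 𝓝 (0 : ℝ),
      HasDerivAt (fun s : ℝ => f (x + s • v)) (fderiv ℝ f (x + t • v) v) t := by
  filter_upwards [(tendsto_add_smul_zero x v).eventually hf.1] with t ht
  exact ht.hasFDerivAt.comp_hasDerivAt t (hasDerivAt_add_smul x v t)

theorem TwiceDifferentiableAt.hasDerivAt_fderiv_line (hf : TwiceDifferentiableAt f x) (v : E) :
    HasDerivAt (fun t : ℝ => fderiv ℝ f (x + t • v) v) (fderiv ℝ (fderiv ℝ f) x v v) 0 := by
  have hf₂ : HasFDerivAt (fun y => fderiv ℝ f y v) ((fderiv ℝ (fderiv ℝ f) x).flip v)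
      (x + (0 : ℝ) • v) := by
    simpa using hf.2.hasFDerivAt.clm_apply (hasFDerivAt_const v x)
  exact hf₂.comp_hasDerivAt 0 (hasDerivAt_add_smul x v 0)

theorem hasFDerivAt_fderiv_comp {F F' : ℝ → ℝ} {u : E → ℝ} {x : E}
    (hu : TwiceDifferentiableAt u x) (hF : ∀ᶠ s in 𝓝 (u x), HasDerivAt F (F' s) s)
    (hF' : DifferentiableAt ℝ F' (u x)) :
    HasFDerivAt (fderiv ℝ (F ∘ u)) (F' (u x) • fderiv ℝ (fderiv ℝ u) x +
      (deriv F' (u x) • fderiv ℝ u x).smulRight (fderiv ℝ u x)) x := by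
  have hfderiv : fderiv ℝ (F ∘ u) =ᶠ[𝓝 x] fun y => F' (u y) • fderiv ℝ u y := by
    filter_upwards [hu.1, hu.1.self_of_nhds.continuousAt.eventually hF] with y huy hFy
    exact (hFy.comp_hasFDerivAt y huy.hasFDerivAt).fderiv
  refine HasFDerivAt.congr_of_eventuallyEq ?_ hfderiv
  exact (hF'.hasDerivAt.comp_hasFDerivAt x hu.1.self_of_nhds.hasFDerivAt).smul hu.2.hasFDerivAt

end SecondOrder

section ConcavityGap

variable {E : Type*} [NormedAddCommGroup E] [NormedSpace ℝ E] {w : E → ℝ} {a b : ℝ} {x y : E}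

/-- Korevaar's concavity function `a w(x) + b w(y) - w(a x + b y)` of `w`, evaluated at the pair
`q = (x, y)`: the function `w` is concave when it is nonpositive for all weights `a + b = 1`. -/
def concavityGap (w : E → ℝ) (a b : ℝ) (q : E × E) : ℝ :=
  a * w q.1 + b * w q.2 - w (a • q.1 + b • q.2)

theorem concavityGap_swap (w : E → ℝ) (a b : ℝ) (x y : E) :
    concavityGap w b a (y, x) = concavityGap w a b (x, y) := by
  simp only [concavityGap, add_comm]

theorem isLocalMax_concavityGap_swap (hmax : IsLocalMax (concavityGap w a b) (x, y)) :
    IsLocalMax (concavityGap w b a) (y, x) := by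
  have := hmax.comp_continuous (g := Prod.swap) (b := (y, x)) continuous_swap.continuousAt
  exact this.congr (.of_forall fun q => (concavityGap_swap w a b q.2 q.1).symm)

theorem fderiv_eq_of_isLocalMax_concavityGap (hmax : IsLocalMax (concavityGap w a b) (x, y))
    (ha : a ≠ 0) (hx : DifferentiableAt ℝ w x) (hz : DifferentiableAt ℝ w (a • x + b • y)) :
    fderiv ℝ w x = fderiv ℝ w (a • x + b • y) := by
  have hsmul : HasFDerivAt (fun x' : E => a • x' + b • y) (a • ContinuousLinearMap.id ℝ E) x :=
    ((hasFDerivAt_id x).const_smul a).add_const _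
  have hgap : HasFDerivAt (fun x' : E => concavityGap w a b (x', y))
      (a • fderiv ℝ w x - (fderiv ℝ w (a • x + b • y)).comp (a • ContinuousLinearMap.id ℝ E)) x :=
    ((hx.hasFDerivAt.const_mul a).add_const (b * w y)).sub
      (hz.hasFDerivAt.comp (f := fun x' : E => a • x' + b • y) x hsmul)
  have hloc : IsLocalMax (fun x' : E => concavityGap w a b (x', y)) x :=
    hmax.comp_continuous (g := fun x' : E => (x', y)) (by fun_prop)
  have hzero := hloc.hasFDerivAt_eq_zero hgap
  rw [ContinuousLinearMap.comp_smul, ContinuousLinearMap.comp_id, ← smul_sub] at hzero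
  exact sub_eq_zero.1 ((smul_eq_zero.1 hzero).resolve_left ha)

theorem fderiv_fderiv_le_of_isLocalMax_concavityGap
    (hmax : IsLocalMax (concavityGap w a b) (x, y)) (hx : TwiceDifferentiableAt w x)
    (hy : TwiceDifferentiableAt w y) (hz : TwiceDifferentiableAt w (a • x + b • y)) (v₁ v₂ : E) :
    a * fderiv ℝ (fderiv ℝ w) x v₁ v₁ + b * fderiv ℝ (fderiv ℝ w) y v₂ v₂ ≤
      fderiv ℝ (fderiv ℝ w) (a • x + b • y) (a • v₁ + b • v₂) (a • v₁ + b • v₂) := by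
  have hline (t : ℝ) : a • (x + t • v₁) + b • (y + t • v₂) =
      a • x + b • y + t • (a • v₁ + b • v₂) := by module
  have hloc : IsLocalMax (fun t : ℝ => a * w (x + t • v₁) + b * w (y + t • v₂) -
      w (a • x + b • y + t • (a • v₁ + b • v₂))) 0 := by
    have := IsLocalMax.comp_continuous (f := concavityGap w a b)
      (g := fun t : ℝ => (x + t • v₁, y + t • v₂)) (b := 0) (by simpa using hmax) (by fun_prop)
    simpa only [Function.comp_def, concavityGap, hline] using this
  refine sub_nonpos.1 (nonpos_of_isLocalMax_of_hasDerivAt hloc ?_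
    (((hx.hasDerivAt_fderiv_line v₁).const_mul a).add
      ((hy.hasDerivAt_fderiv_line v₂).const_mul b) |>.sub (hz.hasDerivAt_fderiv_line _)))
  filter_upwards [hx.eventually_hasDerivAt_line v₁, hy.eventually_hasDerivAt_line v₂,
    hz.eventually_hasDerivAt_line (a • v₁ + b • v₂)] with t h₁ h₂ h₃
  exact ((h₁.const_mul a).add (h₂.const_mul b)).sub h₃

end ConcavityGap

section Curvature

variable {E : Type*} [NormedAddCommGroup E] [InnerProductSpace ℝ E]

theorem gradient_comp [CompleteSpace E] {F : ℝ → ℝ} {m : ℝ} {u : E → ℝ} {x : E}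
    (hu : DifferentiableAt ℝ u x) (hF : HasDerivAt F m (u x)) :
    ∇ (F ∘ u) x = m • ∇ u x := by
  simp [gradient, (hF.comp_hasFDerivAt x hu.hasFDerivAt).fderiv]

theorem gradient_comp_eq_zero_iff [CompleteSpace E] {F : ℝ → ℝ} {m : ℝ} {u : E → ℝ} {x : E}
    (hu : DifferentiableAt ℝ u x) (hF : HasDerivAt F m (u x)) (hm : m ≠ 0) :
    ∇ (F ∘ u) x = 0 ↔ ∇ u x = 0 := by
  rw [gradient_comp hu hF, smul_eq_zero, or_iff_right hm]

variable {ι : Type*} [Fintype ι]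

theorem sum_inner_mul_apply (b : OrthonormalBasis ι ℝ E) (g : E) (L : E →L[ℝ] ℝ) :
    ∑ i, ⟪b i, g⟫_ℝ * L (b i) = L g := by
  conv_rhs => rw [← b.sum_repr' g]
  simp

theorem sum_apply_starProjection_orthogonal_span_singleton (b : OrthonormalBasis ι ℝ E)
    (B : E →L[ℝ] E →L[ℝ] ℝ) (g : E) :
    ∑ i, B ((ℝ ∙ g)ᗮ.starProjection (b i)) ((ℝ ∙ g)ᗮ.starProjection (b i)) =
      ∑ i, B (b i) (b i) - B g g / ‖g‖ ^ 2 := by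
  rcases eq_or_ne g 0 with rfl | hg
  · simp [Submodule.starProjection_top]
  have hg' : ‖g‖ ≠ 0 := norm_ne_zero_iff.mpr hg
  have hexpand (i : ι) :
      B ((ℝ ∙ g)ᗮ.starProjection (b i)) ((ℝ ∙ g)ᗮ.starProjection (b i)) =
        B (b i) (b i) - (⟪b i, g⟫_ℝ * B g (b i) + ⟪b i, g⟫_ℝ * B.flip g (b i)) / ‖g‖ ^ 2 +
          ⟪b i, g⟫_ℝ ^ 2 * (B g g / ‖g‖ ^ 4) := by
    simp only [Submodule.starProjection_orthogonal_val, Submodule.starProjection_singleton,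
      real_inner_comm, RCLike.ofReal_real_eq_id, id_eq, map_sub, map_smul, sub_apply, smul_apply,
      smul_eq_mul, ContinuousLinearMap.flip_apply]
    field_simp
    ring
  simp only [hexpand, Finset.sum_add_distrib, Finset.sum_sub_distrib, ← Finset.sum_div,
    ← Finset.sum_mul, sum_inner_mul_apply, b.sum_sq_inner_right]
  rw [ContinuousLinearMap.flip_apply]
  field_simp
  ring

variable [FiniteDimensional ℝ E]

/-- The level set mean curvature operator `|Du| div(Du/|Du|)`, in the expanded form
`Δu - D²u(Du, Du) / |Du|²`. -/
noncomputable def levelSetCurvature (u : E → ℝ) (x : E) : ℝ :=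
  Δ u x - fderiv ℝ (fderiv ℝ u) x (∇ u x) (∇ u x) / ‖∇ u x‖ ^ 2

theorem laplacian_eq_sum_fderiv_fderiv (b : OrthonormalBasis ι ℝ E) (u : E → ℝ) (x : E) :
    Δ u x = ∑ i, fderiv ℝ (fderiv ℝ u) x (b i) (b i) := by
  simp [InnerProductSpace.laplacian_eq_iteratedFDeriv_orthonormalBasis u b,
    iteratedFDeriv_two_apply]

theorem levelSetCurvature_eq_sum_starProjection (b : OrthonormalBasis ι ℝ E) (u : E → ℝ) (x : E) :
    levelSetCurvature u x = ∑ i, fderiv ℝ (fderiv ℝ u) x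
      ((ℝ ∙ ∇ u x)ᗮ.starProjection (b i)) ((ℝ ∙ ∇ u x)ᗮ.starProjection (b i)) := by
  rw [sum_apply_starProjection_orthogonal_span_singleton, levelSetCurvature,
    laplacian_eq_sum_fderiv_fderiv b]

theorem levelSetCurvature_eq_sum_sum [DecidableEq ι] (b : OrthonormalBasis ι ℝ E) {u : E → ℝ}
    {x : E} (hu : DifferentiableAt ℝ (fderiv ℝ u) x) :
    levelSetCurvature u x =
      ∑ i, ∑ j, ((if i = j then 1 else 0) - fderiv ℝ u x (b i) * fderiv ℝ u x (b j) /
        ‖∇ u x‖ ^ 2) * fderiv ℝ (fun y => fderiv ℝ u y (b j)) x (b i) := by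
  have hcoord (i j : ι) : fderiv ℝ (fun y => fderiv ℝ u y (b j)) x (b i) =
      fderiv ℝ (fderiv ℝ u) x (b i) (b j) := by
    simp [fderiv_clm_apply hu (differentiableAt_const _)]
  have hgrad (i : ι) : fderiv ℝ u x (b i) = ⟪b i, ∇ u x⟫_ℝ := by
    rw [real_inner_comm, inner_gradient_left]
  have hHess : fderiv ℝ (fderiv ℝ u) x (∇ u x) (∇ u x) = ∑ i, ∑ j,
      ⟪b i, ∇ u x⟫_ℝ * (⟪b j, ∇ u x⟫_ℝ * fderiv ℝ (fderiv ℝ u) x (b i) (b j)) := by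
    simp only [← Finset.mul_sum, sum_inner_mul_apply]
    exact (sum_inner_mul_apply b _ ((fderiv ℝ (fderiv ℝ u) x).flip _)).symm
  rw [levelSetCurvature, laplacian_eq_sum_fderiv_fderiv b, hHess]
  simp only [hcoord, hgrad, sub_mul, Finset.sum_sub_distrib, ite_mul, one_mul, zero_mul,
    Finset.sum_ite_eq, Finset.mem_univ, if_true, Finset.sum_div, div_mul_eq_mul_div, mul_assoc]

theorem levelSetCurvature_comp {F F' : ℝ → ℝ} {u : E → ℝ} {x : E}
    (hu : TwiceDifferentiableAt u x) (hF : ∀ᶠ s in 𝓝 (u x), HasDerivAt F (F' s) s)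
    (hF' : DifferentiableAt ℝ F' (u x)) (hF0 : F' (u x) ≠ 0) :
    levelSetCurvature (F ∘ u) x = F' (u x) * levelSetCurvature u x := by
  have hspan : (ℝ ∙ ∇ (F ∘ u) x) = ℝ ∙ ∇ u x := by
    rw [gradient_comp hu.1.self_of_nhds hF.self_of_nhds,
      Submodule.span_singleton_smul_eq (isUnit_iff_ne_zero.2 hF0)]
  have hperp (v : E) : fderiv ℝ u x ((ℝ ∙ ∇ u x)ᗮ.starProjection v) = 0 := by
    rw [← inner_gradient_left]
    exact Submodule.mem_orthogonal_singleton_iff_inner_right.1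
      (Submodule.starProjection_apply_mem _ v)
  simp only [levelSetCurvature_eq_sum_starProjection (stdOrthonormalBasis ℝ E), hspan,
    (hasFDerivAt_fderiv_comp hu hF hF').fderiv, hperp, Finset.mul_sum, add_apply, smul_apply,
    ContinuousLinearMap.smulRight_apply, smul_eq_mul, mul_zero, add_zero]

/-- The function `u` solves the level set equation `-|Du| div(Du/|Du|) = h(u)` in `Ω` away from
its critical points, where the operator is singular and nothing beyond differentiability is
required. -/
structure IsLevelSetSolution (Ω : Set E) (h : ℝ → ℝ) (u : E → ℝ) : Prop where
  differentiableAt : ∀ x ∈ Ω, DifferentiableAt ℝ u x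
  differentiableAt_fderiv : ∀ x ∈ Ω, ∇ u x ≠ 0 → DifferentiableAt ℝ (fderiv ℝ u) x
  levelSetCurvature_eq : ∀ x ∈ Ω, ∇ u x ≠ 0 → levelSetCurvature u x = -h (u x)

variable {Ω : Set E} {h : ℝ → ℝ} {u : E → ℝ}

theorem IsLevelSetSolution.twiceDifferentiableAt {x : E} (hsol : IsLevelSetSolution Ω h u)
    (hΩo : IsOpen Ω) (hx : x ∈ Ω) (hgrad : ∇ u x ≠ 0) : TwiceDifferentiableAt u x :=
  ⟨(hΩo.eventually_mem hx).mono hsol.differentiableAt, hsol.differentiableAt_fderiv x hx hgrad⟩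

theorem isLevelSetSolution_of_sum_sum [DecidableEq ι] (b : OrthonormalBasis ι ℝ E)
    (hu : ∀ x ∈ Ω, DifferentiableAt ℝ u x)
    (hu₂ : ∀ x ∈ Ω, ∇ u x ≠ 0 → DifferentiableAt ℝ (fderiv ℝ u) x)
    (heq : ∀ x ∈ Ω, ∇ u x ≠ 0 →
      -(∑ i, ∑ j, ((if i = j then 1 else 0) - fderiv ℝ u x (b i) * fderiv ℝ u x (b j) /
        ‖∇ u x‖ ^ 2) * fderiv ℝ (fun y => fderiv ℝ u y (b j)) x (b i)) = h (u x)) :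
    IsLevelSetSolution Ω h u where
  differentiableAt := hu
  differentiableAt_fderiv := hu₂
  levelSetCurvature_eq x hx hgrad := by
    rw [levelSetCurvature_eq_sum_sum b (hu₂ x hx hgrad), ← heq x hx hgrad, neg_neg]

theorem IsLevelSetSolution.comp {F F' k : ℝ → ℝ} {I : Set ℝ} (hsol : IsLevelSetSolution Ω h u)
    (hΩo : IsOpen Ω) (hI : IsOpen I) (hu : MapsTo u Ω I) (hF : ∀ s ∈ I, HasDerivAt F (F' s) s)
    (hF' : ∀ s ∈ I, DifferentiableAt ℝ F' s) (hF0 : ∀ s ∈ I, F' s ≠ 0)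
    (hk : ∀ s ∈ I, k (F s) = F' s * h s) : IsLevelSetSolution Ω k (F ∘ u) := by
  have hFev {x : E} (hx : x ∈ Ω) : ∀ᶠ s in 𝓝 (u x), HasDerivAt F (F' s) s :=
    (hI.eventually_mem (hu hx)).mono hF
  have hgrad {x : E} (hx : x ∈ Ω) (hFu : ∇ (F ∘ u) x ≠ 0) : ∇ u x ≠ 0 :=
    (gradient_comp_eq_zero_iff (hsol.differentiableAt x hx) (hF _ (hu hx))
      (hF0 _ (hu hx))).not.1 hFu
  refine ⟨fun x hx => ?_, fun x hx hFu => ?_, fun x hx hFu => ?_⟩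
  · exact (hF _ (hu hx)).differentiableAt.comp x (hsol.differentiableAt x hx)
  · exact (hasFDerivAt_fderiv_comp (hsol.twiceDifferentiableAt hΩo hx (hgrad hx hFu)) (hFev hx)
      (hF' _ (hu hx))).differentiableAt
  · rw [levelSetCurvature_comp (hsol.twiceDifferentiableAt hΩo hx (hgrad hx hFu)) (hFev hx)
      (hF' _ (hu hx)) (hF0 _ (hu hx)), hsol.levelSetCurvature_eq x hx (hgrad hx hFu),
      Function.comp_apply, hk _ (hu hx), mul_neg]

end Curvature

section InteriorMaximum

variable {E : Type*} [NormedAddCommGroup E] [InnerProductSpace ℝ E] [FiniteDimensional ℝ E]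
variable {Ω : Set E} {w : E → ℝ} {a b : ℝ} {x y : E}

-- The second-order condition is tested with `λ v` and `μ v`, where `v` runs over the projections
-- of an orthonormal basis to the hyperplane orthogonal to the common gradient.
theorem sq_mul_levelSetCurvature_le_of_isLocalMax_concavityGap
    (hmax : IsLocalMax (concavityGap w a b) (x, y)) (hx : TwiceDifferentiableAt w x)
    (hy : TwiceDifferentiableAt w y) (hz : TwiceDifferentiableAt w (a • x + b • y))
    (hgx : ∇ w x = ∇ w (a • x + b • y)) (hgy : ∇ w y = ∇ w (a • x + b • y)) (lam mu : ℝ) :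
    a * (lam ^ 2 * levelSetCurvature w x) + b * (mu ^ 2 * levelSetCurvature w y) ≤
      (a * lam + b * mu) ^ 2 * levelSetCurvature w (a • x + b • y) := by
  simp only [levelSetCurvature_eq_sum_starProjection (stdOrthonormalBasis ℝ E), hgx, hgy,
    Finset.mul_sum, ← Finset.sum_add_distrib]
  refine Finset.sum_le_sum fun i _ => ?_
  set v := (ℝ ∙ ∇ w (a • x + b • y))ᗮ.starProjection (stdOrthonormalBasis ℝ E i)
  have hdir : a • lam • v + b • mu • v = (a * lam + b * mu) • v := by module
  have hle := fderiv_fderiv_le_of_isLocalMax_concavityGap hmax hx hy hz (lam • v) (mu • v)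
  simp only [hdir, map_smul, smul_apply, smul_eq_mul] at hle
  linarith

theorem gradient_eq_of_isLocalMax_concavityGap (hmax : IsLocalMax (concavityGap w a b) (x, y))
    (ha : a ≠ 0) (hx : DifferentiableAt ℝ w x) (hz : DifferentiableAt ℝ w (a • x + b • y)) :
    ∇ w x = ∇ w (a • x + b • y) := by
  rw [gradient, gradient, fderiv_eq_of_isLocalMax_concavityGap hmax ha hx hz]

theorem concavityGap_nonpos_of_isLocalMax {ψ : ℝ → ℝ} {s : Set ℝ} (hΩo : IsOpen Ω)
    (hΩc : Convex ℝ Ω) (hsol : IsLevelSetSolution Ω (fun t => (ψ t)⁻¹) w)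
    (hcrit : {x ∈ Ω | ∇ w x = 0}.Subsingleton) (hws : MapsTo w Ω s) (hψc : ConvexOn ℝ s ψ)
    (hψm : StrictMonoOn ψ s) (hψ0 : ∀ t ∈ s, 0 < ψ t) (ha : 0 < a) (hb : 0 < b) (hab : a + b = 1)
    (hx : x ∈ Ω) (hy : y ∈ Ω) (hmax : IsLocalMax (concavityGap w a b) (x, y)) :
    concavityGap w a b (x, y) ≤ 0 := by
  set z := a • x + b • y with hz_def
  have hz : z ∈ Ω := hΩc hx hy ha.le hb.le hab
  have hgx : ∇ w x = ∇ w z := gradient_eq_of_isLocalMax_concavityGap hmax ha.ne'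
    (hsol.differentiableAt x hx) (hsol.differentiableAt z hz)
  have hgy : ∇ w y = ∇ w z := by
    rw [hz_def, add_comm] at hz ⊢
    exact gradient_eq_of_isLocalMax_concavityGap (isLocalMax_concavityGap_swap hmax) hb.ne'
      (hsol.differentiableAt y hy) (hsol.differentiableAt _ hz)
  by_cases hg : ∇ w z = 0
  · obtain rfl : x = y := hcrit ⟨hx, hgx.trans hg⟩ ⟨hy, hgy.trans hg⟩
    simp [concavityGap, ← add_smul, ← add_mul, hab]
  have hgx0 : ∇ w x ≠ 0 := hgx.trans_ne hg
  have hgy0 : ∇ w y ≠ 0 := hgy.trans_ne hg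
  have hle := sq_mul_levelSetCurvature_le_of_isLocalMax_concavityGap hmax
    (hsol.twiceDifferentiableAt hΩo hx hgx0) (hsol.twiceDifferentiableAt hΩo hy hgy0)
    (hsol.twiceDifferentiableAt hΩo hz hg) hgx hgy (ψ (w x)) (ψ (w y))
  rw [hsol.levelSetCurvature_eq x hx hgx0, hsol.levelSetCurvature_eq y hy hgy0,
    hsol.levelSetCurvature_eq z hz hg] at hle
  have hψx := hψ0 _ (hws hx)
  have hψy := hψ0 _ (hws hy)
  have hψz := hψ0 _ (hws hz)
  have hψ_le : a * ψ (w x) + b * ψ (w y) ≤ ψ (w z) := by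
    field_simp at hle
    nlinarith [mul_pos ha hψx, mul_pos hb hψy]
  have hw_le : a * w x + b * w y ≤ w z :=
    (hψm.le_iff_le (hψc.1 (hws hx) (hws hy) ha.le hb.le hab) (hws hz)).1
      ((hψc.2 (hws hx) (hws hy) ha.le hb.le hab).trans hψ_le)
  exact sub_nonpos.2 hw_le

end InteriorMaximum

section BoundaryGrowth

variable {E : Type*} [NormedAddCommGroup E] [InnerProductSpace ℝ E]
variable {Ω : Set E} {h : ℝ → ℝ} {u : E → ℝ} {u₀ κ : ℝ} {c x : E}

theorem hasDerivAt_mul_sq_norm_sub_line (κ : ℝ) (c x v : E) (t : ℝ) :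
    HasDerivAt (fun s : ℝ => κ * ‖x + s • v - c‖ ^ 2) (2 * κ * ⟪x + t • v - c, v⟫_ℝ) t := by
  have := ((hasDerivAt_add_smul x v t).sub_const c).norm_sq.const_mul κ
  exact this.congr_deriv (by ring)

theorem fderiv_apply_eq_of_isLocalMin_add_sq_norm
    (hmin : IsLocalMin (fun y => u y + κ * ‖y - c‖ ^ 2) x) (hu : DifferentiableAt ℝ u x) (v : E) :
    fderiv ℝ u x v = -(2 * κ * ⟪x - c, v⟫_ℝ) := by
  have hline : HasDerivAt (fun t : ℝ => u (x + t • v)) (fderiv ℝ u x v) 0 :=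
    hu.hasFDerivAt.comp_hasDerivAt_of_eq 0 (hasDerivAt_add_smul x v 0) (by simp)
  have hloc : IsLocalMin (fun t : ℝ => u (x + t • v) + κ * ‖x + t • v - c‖ ^ 2) 0 :=
    isLocalMin_comp_add_smul hmin v
  have hzero := hloc.hasDerivAt_eq_zero (hline.add (hasDerivAt_mul_sq_norm_sub_line κ c x v 0))
  simpa [add_eq_zero_iff_eq_neg] using hzero

theorem fderiv_fderiv_ge_of_isLocalMin_add_sq_norm
    (hmin : IsLocalMin (fun y => u y + κ * ‖y - c‖ ^ 2) x) (hu : TwiceDifferentiableAt u x)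
    (v : E) : -(2 * κ * ‖v‖ ^ 2) ≤ fderiv ℝ (fderiv ℝ u) x v v := by
  have hloc : IsLocalMax (fun t : ℝ => -(u (x + t • v) + κ * ‖x + t • v - c‖ ^ 2)) 0 :=
    IsMinFilter.neg (isLocalMin_comp_add_smul hmin v)
  have hinner : HasDerivAt (fun t : ℝ => 2 * κ * ⟪x + t • v - c, v⟫_ℝ) (2 * κ * ‖v‖ ^ 2) 0 := by
    have := ((hasDerivAt_add_smul x v 0).sub_const c).inner ℝ (hasDerivAt_const 0 v)
    simpa using this.const_mul (2 * κ)
  have hnonpos := nonpos_of_isLocalMax_of_hasDerivAt hloc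
    ((hu.eventually_hasDerivAt_line v).mono fun t ht =>
      (ht.add (hasDerivAt_mul_sq_norm_sub_line κ c x v t)).neg)
    ((hu.hasDerivAt_fderiv_line v).add hinner).neg
  linarith

variable [FiniteDimensional ℝ E]

theorem levelSetCurvature_ge_of_isLocalMin_add_sq_norm (hκ : 0 ≤ κ)
    (hmin : IsLocalMin (fun y => u y + κ * ‖y - c‖ ^ 2) x) (hu : TwiceDifferentiableAt u x) :
    -(2 * κ * Module.finrank ℝ E) ≤ levelSetCurvature u x := by
  rw [levelSetCurvature_eq_sum_starProjection (stdOrthonormalBasis ℝ E)]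
  set P := (ℝ ∙ ∇ u x)ᗮ.starProjection
  have hterm (i) : -(2 * κ) ≤ fderiv ℝ (fderiv ℝ u) x (P (stdOrthonormalBasis ℝ E i))
      (P (stdOrthonormalBasis ℝ E i)) := by
    have hP : ‖P (stdOrthonormalBasis ℝ E i)‖ ≤ 1 :=
      (Submodule.norm_starProjection_apply_le _ _).trans (by simp)
    have hP2 : ‖P (stdOrthonormalBasis ℝ E i)‖ ^ 2 ≤ 1 := pow_le_one₀ (norm_nonneg _) hP
    refine le_trans ?_ (fderiv_fderiv_ge_of_isLocalMin_add_sq_norm hmin hu _)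
    nlinarith
  calc -(2 * κ * Module.finrank ℝ E) = ∑ _i : Fin (Module.finrank ℝ E), -(2 * κ) := by
        simp [mul_comm]
    _ ≤ _ := Finset.sum_le_sum fun i _ => hterm i

theorem IsLevelSetSolution.not_isLocalMin_add_sq_norm (hsol : IsLevelSetSolution Ω h u)
    (hΩo : IsOpen Ω) (hκ : 0 < κ) (hh : ∀ y ∈ Ω, 2 * κ * Module.finrank ℝ E < h (u y))
    (hc : ∇ u c ≠ 0) (hx : x ∈ Ω) : ¬IsLocalMin (fun y => u y + κ * ‖y - c‖ ^ 2) x := by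
  intro hmin
  have hgrad : ∇ u x ≠ 0 := by
    intro hgrad
    have hfderiv := fderiv_apply_eq_of_isLocalMin_add_sq_norm hmin (hsol.differentiableAt x hx)
      (x - c)
    rw [← inner_gradient_left, hgrad, inner_zero_left, eq_comm, neg_eq_zero] at hfderiv
    have hxc : x = c := by simpa [hκ.ne', sub_eq_zero] using hfderiv
    exact hc (hxc ▸ hgrad)
  have hge := levelSetCurvature_ge_of_isLocalMin_add_sq_norm hκ.le hmin
    (hsol.twiceDifferentiableAt hΩo hx hgrad)
  rw [hsol.levelSetCurvature_eq x hx hgrad] at hge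
  linarith [hh x hx]

theorem IsLevelSetSolution.mul_sq_infDist_le_of_gradient_ne_zero (hsol : IsLevelSetSolution Ω h u)
    (hΩo : IsOpen Ω) (hΩb : IsBounded Ω) (hu : ContinuousOn u (closure Ω))
    (hbc : ∀ x ∈ frontier Ω, u₀ ≤ u x) (hκ : 0 < κ)
    (hh : ∀ y ∈ Ω, 2 * κ * Module.finrank ℝ E < h (u y)) (hcΩ : c ∈ Ω) (hc : ∇ u c ≠ 0) :
    κ * infDist c Ωᶜ ^ 2 ≤ u c - u₀ := by
  obtain ⟨x, hx, hmin⟩ := hΩb.isCompact_closure.exists_isMinOn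
    (f := fun y => u y + κ * ‖y - c‖ ^ 2) ⟨c, subset_closure hcΩ⟩
    (hu.add (by fun_prop))
  have hxΩ : x ∉ Ω := fun hxΩ => hsol.not_isLocalMin_add_sq_norm hΩo hκ hh hc hxΩ
    ((hmin.on_subset subset_closure).isLocalMin (hΩo.mem_nhds hxΩ))
  have hux : u₀ ≤ u x := hbc x (hΩo.frontier_eq ▸ ⟨hx, hxΩ⟩)
  have hdist : infDist c Ωᶜ ≤ ‖x - c‖ := by
    simpa [dist_eq_norm, norm_sub_rev] using infDist_le_dist_of_mem (x := c) hxΩ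
  calc κ * infDist c Ωᶜ ^ 2 ≤ κ * ‖x - c‖ ^ 2 := by
        have := infDist_nonneg (x := c) (s := Ωᶜ)
        gcongr
    _ ≤ u c - u₀ := by
        have hxc : u x + κ * ‖x - c‖ ^ 2 ≤ u c + κ * ‖c - c‖ ^ 2 := hmin (subset_closure hcΩ)
        rw [sub_self, norm_zero] at hxc
        linarith

-- At the critical point the comparison paraboloid may touch `u` from below at its own vertex, so
-- the bound there is obtained by continuity from the noncritical points around it.
theorem IsLevelSetSolution.mul_sq_infDist_le [Nontrivial E] (hsol : IsLevelSetSolution Ω h u)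
    (hΩo : IsOpen Ω) (hΩb : IsBounded Ω) (hu : ContinuousOn u (closure Ω))
    (hcrit : {x ∈ Ω | ∇ u x = 0}.Subsingleton) (hbc : ∀ x ∈ frontier Ω, u₀ ≤ u x) (hκ : 0 < κ)
    (hh : ∀ y ∈ Ω, 2 * κ * Module.finrank ℝ E < h (u y)) (hcΩ : c ∈ Ω) :
    κ * infDist c Ωᶜ ^ 2 ≤ u c - u₀ := by
  by_cases hc : ∇ u c = 0
  · have hnear : ∀ᶠ y in 𝓝[≠] c, κ * infDist y Ωᶜ ^ 2 ≤ u y - u₀ := by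
      filter_upwards [self_mem_nhdsWithin, nhdsWithin_le_nhds (hΩo.mem_nhds hcΩ)] with y hyc hyΩ
      exact hsol.mul_sq_infDist_le_of_gradient_ne_zero hΩo hΩb hu hbc hκ hh hyΩ
        fun hy => hyc (hcrit ⟨hyΩ, hy⟩ ⟨hcΩ, hc⟩)
    have hleft : ContinuousAt (fun y => κ * infDist y Ωᶜ ^ 2) c :=
      (((continuous_infDist_pt Ωᶜ).pow 2).const_mul κ).continuousAt
    have hright : ContinuousAt (fun y => u y - u₀) c :=
      (hsol.differentiableAt c hcΩ).continuousAt.sub_const u₀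
    have := Module.punctured_nhds_neBot ℝ E c
    exact le_of_tendsto_of_tendsto (hleft.mono_left nhdsWithin_le_nhds)
      (hright.mono_left nhdsWithin_le_nhds) hnear
  · exact hsol.mul_sq_infDist_le_of_gradient_ne_zero hΩo hΩb hu hbc hκ hh hcΩ hc

end BoundaryGrowth

section ConcavityMaximumPrinciple

variable {E : Type*} [NormedAddCommGroup E] [NormedSpace ℝ E]
variable {Ω : Set E} {w : E → ℝ} {a b : ℝ} {x y : E}

/-- The difference quotients of `w` at `x` tend to `+∞` along some direction pointing into the
closure of `Ω`. This keeps maxima of `concavityGap` away from the boundary. -/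
def HasInfiniteInnerSlope (Ω : Set E) (w : E → ℝ) (x : E) : Prop :=
  ∃ v, (∀ᶠ t in 𝓝[>] (0 : ℝ), x + t • v ∈ closure Ω) ∧
    Tendsto (fun t : ℝ => t⁻¹ • (w (x + t • v) - w x)) (𝓝[>] 0) atTop

theorem HasInfiniteInnerSlope.not_isMaxOn_concavityGap (hslope : HasInfiniteInnerSlope Ω w x)
    (ha : 0 < a) (hy : y ∈ closure Ω) (hz : DifferentiableAt ℝ w (a • x + b • y)) :
    ¬IsMaxOn (concavityGap w a b) (closure Ω ×ˢ closure Ω) (x, y) := by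
  intro hmax
  obtain ⟨v, hv, hxslope⟩ := hslope
  set z := a • x + b • y with hz_def
  have hzslope : Tendsto (fun t : ℝ => t⁻¹ • (w (z + t • a • v) - w z)) (𝓝[>] 0)
      (𝓝 (fderiv ℝ w z (a • v))) := by
    have hline : HasDerivAt (fun t : ℝ => w (z + t • a • v)) (fderiv ℝ w z (a • v)) 0 :=
      hz.hasFDerivAt.comp_hasDerivAt_of_eq 0 (hasDerivAt_add_smul z (a • v) 0) (by simp)
    simpa using hline.tendsto_slope_zero_right
  have hle : ∀ᶠ t in 𝓝[>] (0 : ℝ),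
      a * (t⁻¹ • (w (x + t • v) - w x)) ≤ t⁻¹ • (w (z + t • a • v) - w z) := by
    filter_upwards [hv, self_mem_nhdsWithin] with t htv ht
    have hgap : concavityGap w a b (x + t • v, y) ≤ concavityGap w a b (x, y) := hmax ⟨htv, hy⟩
    have hzt : a • (x + t • v) + b • y = z + t • a • v := by rw [hz_def]; module
    simp only [concavityGap, hzt, ← hz_def] at hgap
    rw [smul_eq_mul, smul_eq_mul, mul_left_comm]
    exact mul_le_mul_of_nonneg_left (by linarith) (inv_nonneg.2 (le_of_lt ht))
  exact not_tendsto_atTop_of_tendsto_nhds hzslope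
    (tendsto_atTop_mono' _ hle (hxslope.const_mul_atTop ha))

theorem isMaxOn_concavityGap_swap
    (hmax : IsMaxOn (concavityGap w a b) (closure Ω ×ˢ closure Ω) (x, y)) :
    IsMaxOn (concavityGap w b a) (closure Ω ×ˢ closure Ω) (y, x) := by
  rintro ⟨y', x'⟩ ⟨hy', hx'⟩
  simpa only [mem_ofPred_eq, concavityGap_swap w a b] using hmax (mk_mem_prod hx' hy')

theorem continuousOn_concavityGap (hw : ContinuousOn w Ω) (hΩc : Convex ℝ Ω) (ha : 0 ≤ a)
    (hb : 0 ≤ b) (hab : a + b = 1) : ContinuousOn (concavityGap w a b) (Ω ×ˢ Ω) := by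
  refine ((hw.comp continuousOn_fst fun q hq => hq.1).const_mul a |>.add
    ((hw.comp continuousOn_snd fun q hq => hq.2).const_mul b)).sub
    (hw.comp (by fun_prop) fun q hq => hΩc hq.1 hq.2 ha hb hab)

theorem concavityGap_nonpos_of_isMaxOn (hΩo : IsOpen Ω) (hΩc : Convex ℝ Ω)
    (hdiff : ∀ x ∈ Ω, DifferentiableAt ℝ w x) (hbc : ∀ x ∈ frontier Ω, w x = 0)
    (hslope : ∀ x ∈ frontier Ω, HasInfiniteInnerSlope Ω w x)
    (hint : ∀ x ∈ Ω, ∀ y ∈ Ω, IsLocalMax (concavityGap w a b) (x, y) →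
      concavityGap w a b (x, y) ≤ 0)
    (ha : 0 < a) (hb : 0 < b) (hab : a + b = 1) (hx : x ∈ closure Ω) (hy : y ∈ closure Ω)
    (hmax : IsMaxOn (concavityGap w a b) (closure Ω ×ˢ closure Ω) (x, y)) :
    concavityGap w a b (x, y) ≤ 0 := by
  have hfront {x : E} (hx : x ∈ closure Ω) (hxΩ : x ∉ Ω) : x ∈ frontier Ω :=
    hΩo.frontier_eq ▸ ⟨hx, hxΩ⟩
  by_cases hz : a • x + b • y ∈ Ω
  · have hxΩ : x ∈ Ω := by
      by_contra hxΩ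
      exact (hslope x (hfront hx hxΩ)).not_isMaxOn_concavityGap ha hy (hdiff _ hz) hmax
    have hyΩ : y ∈ Ω := by
      by_contra hyΩ
      rw [add_comm] at hz
      exact (hslope y (hfront hy hyΩ)).not_isMaxOn_concavityGap hb hx (hdiff _ hz)
        (isMaxOn_concavityGap_swap hmax)
    exact hint x hxΩ y hyΩ (hmax.isLocalMax
      (mem_of_superset ((hΩo.prod hΩo).mem_nhds ⟨hxΩ, hyΩ⟩)
        (prod_mono subset_closure subset_closure)))
  · have hxΩ : x ∉ Ω := fun hxΩ => hz <| hΩo.interior_eq ▸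
      hΩc.combo_interior_closure_mem_interior (hΩo.interior_eq.symm ▸ hxΩ) hy ha hb.le hab
    have hyΩ : y ∉ Ω := fun hyΩ => hz <| hΩo.interior_eq ▸
      hΩc.combo_closure_interior_mem_interior hx (hΩo.interior_eq.symm ▸ hyΩ) ha.le hb hab
    have hzc := hΩc.closure hx hy ha.le hb.le hab
    simp [concavityGap, hbc x (hfront hx hxΩ), hbc y (hfront hy hyΩ), hbc _ (hfront hzc hz)]

theorem concaveOn_closure_of_concavityGap_nonpos_of_isLocalMax [FiniteDimensional ℝ E]
    (hΩo : IsOpen Ω) (hΩc : Convex ℝ Ω) (hΩb : IsBounded Ω) (hw : ContinuousOn w (closure Ω))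
    (hdiff : ∀ x ∈ Ω, DifferentiableAt ℝ w x) (hbc : ∀ x ∈ frontier Ω, w x = 0)
    (hslope : ∀ x ∈ frontier Ω, HasInfiniteInnerSlope Ω w x)
    (hint : ∀ a b : ℝ, 0 < a → 0 < b → a + b = 1 → ∀ x ∈ Ω, ∀ y ∈ Ω,
      IsLocalMax (concavityGap w a b) (x, y) → concavityGap w a b (x, y) ≤ 0) :
    ConcaveOn ℝ (closure Ω) w := by
  have := FiniteDimensional.proper ℝ E
  refine concaveOn_iff_forall_pos.2 ⟨hΩc.closure, fun x hx y hy a b ha hb hab => ?_⟩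
  obtain ⟨⟨x₀, y₀⟩, ⟨hx₀, hy₀⟩, hmax⟩ :=
    (hΩb.isCompact_closure.prod hΩb.isCompact_closure).exists_isMaxOn ⟨(x, y), hx, hy⟩
      (continuousOn_concavityGap hw hΩc.closure ha.le hb.le hab)
  have hgap : concavityGap w a b (x, y) ≤ 0 := (hmax ⟨hx, hy⟩).trans <|
    concavityGap_nonpos_of_isMaxOn hΩo hΩc hdiff hbc hslope (hint a b ha hb hab) ha hb hab
      hx₀ hy₀ hmax
  exact sub_nonpos.1 hgap

end ConcavityMaximumPrinciple

theorem IsLevelSetSolution.concaveOn_closure {E : Type*} [NormedAddCommGroup E]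
    [InnerProductSpace ℝ E] [FiniteDimensional ℝ E] {Ω : Set E} {w : E → ℝ} {ψ : ℝ → ℝ}
    {s : Set ℝ} (hsol : IsLevelSetSolution Ω (fun t => (ψ t)⁻¹) w) (hΩo : IsOpen Ω)
    (hΩc : Convex ℝ Ω) (hΩb : IsBounded Ω) (hw : ContinuousOn w (closure Ω))
    (hcrit : {x ∈ Ω | ∇ w x = 0}.Subsingleton) (hbc : ∀ x ∈ frontier Ω, w x = 0)
    (hslope : ∀ x ∈ frontier Ω, HasInfiniteInnerSlope Ω w x) (hws : MapsTo w Ω s)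
    (hψc : ConvexOn ℝ s ψ) (hψm : StrictMonoOn ψ s) (hψ0 : ∀ t ∈ s, 0 < ψ t) :
    ConcaveOn ℝ (closure Ω) w :=
  concaveOn_closure_of_concavityGap_nonpos_of_isLocalMax hΩo hΩc hΩb hw hsol.differentiableAt
    hbc hslope fun _ _ ha hb hab _ hx _ hy hmax =>
      concavityGap_nonpos_of_isLocalMax hΩo hΩc hsol hcrit hws hψc hψm hψ0 ha hb hab hx hy hmax

section InnerSlope

variable {E : Type*} [NormedAddCommGroup E] [NormedSpace ℝ E]
variable {Ω : Set E} {f : E → ℝ} {κ α t : ℝ} {c x : E}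

theorem add_smul_sub_mem_of_mem_closure (hΩo : IsOpen Ω) (hΩc : Convex ℝ Ω)
    (hx : x ∈ closure Ω) (hc : c ∈ Ω) (ht : t ∈ Ioc (0 : ℝ) 1) : x + t • (c - x) ∈ Ω :=
  interior_subset <| hΩc.add_smul_sub_mem_interior' hx (hΩo.interior_eq.symm ▸ hc) ht

theorem mul_infDist_compl_le_infDist_compl_add_smul_sub (hΩo : IsOpen Ω) (hΩc : Convex ℝ Ω)
    (hx : x ∈ closure Ω) (ht : t ∈ Ioc (0 : ℝ) 1) :
    t * infDist c Ωᶜ ≤ infDist (x + t • (c - x)) Ωᶜ := by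
  rcases Ωᶜ.eq_empty_or_nonempty with hempty | hne
  · simp [hempty]
  refine (le_infDist hne).2 fun y hy => ?_
  by_contra! hlt
  set c' := c + t⁻¹ • (y - (x + t • (c - x))) with hc'_def
  have hc' : c' ∈ Ω := by
    refine ball_infDist_compl_subset (x := c) (mem_ball_iff_norm.2 ?_)
    rw [hc'_def, add_sub_cancel_left, norm_smul, norm_inv, Real.norm_of_nonneg ht.1.le,
      ← dist_eq_norm, dist_comm, inv_mul_lt_iff₀ ht.1]
    exact hlt
  have hy_eq : x + t • (c' - x) = y := by
    rw [hc'_def, add_sub_right_comm, smul_add, smul_inv_smul₀ ht.1.ne']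
    abel
  exact hy (hy_eq ▸ add_smul_sub_mem_of_mem_closure hΩo hΩc hx hc' ht)

theorem hasInfiniteInnerSlope_rpow_of_mul_sq_infDist_le (hΩo : IsOpen Ω) (hΩc : Convex ℝ Ω)
    (hκ : 0 < κ) (hf : ∀ y ∈ Ω, κ * infDist y Ωᶜ ^ 2 ≤ f y) (hα : 0 < α) (hα₂ : α < 1 / 2)
    (hx : x ∈ frontier Ω) (hfx : f x = 0) (hc : c ∈ Ω) :
    HasInfiniteInnerSlope Ω (fun y => f y ^ α) x := by
  have hmem {t : ℝ} (ht : t ∈ Ioc (0 : ℝ) 1) : x + t • (c - x) ∈ Ω :=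
    add_smul_sub_mem_of_mem_closure hΩo hΩc (frontier_subset_closure hx) hc ht
  have hd : 0 < infDist c Ωᶜ := by
    have hxΩ : x ∉ Ω := (hΩo.frontier_eq ▸ hx : x ∈ closure Ω \ Ω).2
    exact (hΩo.isClosed_compl.notMem_iff_infDist_pos ⟨x, hxΩ⟩).1 (not_not.2 hc)
  have hm : 0 < (κ * infDist c Ωᶜ ^ 2) ^ α := by positivity
  have hexp : 2 * α - 1 < 0 := by linarith
  refine ⟨c - x, (eventually_mem_set.2 (Ioc_mem_nhdsGT one_pos)).mono fun t ht =>
    subset_closure (hmem ht), ?_⟩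
  refine tendsto_atTop_mono' _ ?_ ((tendsto_rpow_neg_nhdsGT_zero hexp).const_mul_atTop hm)
  filter_upwards [Ioc_mem_nhdsGT one_pos] with t ht
  have ht0 : 0 < t := ht.1
  have hgrowth : κ * infDist c Ωᶜ ^ 2 * t ^ 2 ≤ f (x + t • (c - x)) := by
    refine le_trans ?_ (hf _ (hmem ht))
    rw [mul_assoc, ← mul_pow, mul_comm _ t]
    gcongr
    exact mul_infDist_compl_le_infDist_compl_add_smul_sub hΩo hΩc (frontier_subset_closure hx) ht
  calc (κ * infDist c Ωᶜ ^ 2) ^ α * t ^ (2 * α - 1)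
      = t⁻¹ * (κ * infDist c Ωᶜ ^ 2 * t ^ 2) ^ α := by
        rw [Real.mul_rpow (y := t ^ 2) (by positivity) (by positivity),
          ← Real.rpow_natCast_mul ht0.le, Real.rpow_sub_one ht0.ne', Nat.cast_ofNat]
        ring
    _ ≤ t⁻¹ * f (x + t • (c - x)) ^ α := by gcongr
    _ = t⁻¹ • (f (x + t • (c - x)) ^ α - f x ^ α) := by
        rw [hfx, Real.zero_rpow hα.ne', sub_zero, smul_eq_mul]

end InnerSlope

section Powers

variable {E : Type*} [NormedAddCommGroup E] [InnerProductSpace ℝ E] [FiniteDimensional ℝ E]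
variable {Ω : Set E} {u : E → ℝ} {u₀ α : ℝ}

theorem hasDerivAt_sub_rpow {s : ℝ} (hs : s ∈ Ioi u₀) (α : ℝ) :
    HasDerivAt (fun s => (s - u₀) ^ α) (α * (s - u₀) ^ (α - 1)) s := by
  simpa using ((hasDerivAt_id s).sub_const u₀).rpow_const (p := α) (.inl (sub_pos.2 hs).ne')

theorem IsLevelSetSolution.sub_rpow (hsol : IsLevelSetSolution Ω (fun _ => 1) u) (hΩo : IsOpen Ω)
    (hpos : MapsTo u Ω (Ioi u₀)) (hα : 0 < α) :
    IsLevelSetSolution Ω (fun t => (α⁻¹ * t ^ (α⁻¹ - 1))⁻¹) (fun x => (u x - u₀) ^ α) := by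
  refine hsol.comp (F := fun s => (s - u₀) ^ α) (F' := fun s => α * (s - u₀) ^ (α - 1)) hΩo
    isOpen_Ioi hpos (fun s hs => hasDerivAt_sub_rpow hs α)
    (fun s hs => ((hasDerivAt_sub_rpow hs (α - 1)).differentiableAt.const_mul α))
    (fun s hs => (mul_pos hα (Real.rpow_pos_of_pos (sub_pos.2 hs) _)).ne') (fun s hs => ?_)
  have hs0 : 0 ≤ s - u₀ := (sub_pos.2 hs).le
  rw [← Real.rpow_mul hs0, mul_inv, inv_inv, ← Real.rpow_neg hs0, mul_one, mul_sub,
    mul_inv_cancel₀ hα.ne', mul_one, neg_sub]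

theorem IsLevelSetSolution.exists_mul_sq_infDist_le [Nontrivial E]
    (hsol : IsLevelSetSolution Ω (fun _ => 1) u) (hΩo : IsOpen Ω) (hΩb : IsBounded Ω)
    (hu : ContinuousOn u (closure Ω)) (hcrit : {x ∈ Ω | ∇ u x = 0}.Subsingleton)
    (hbc : ∀ x ∈ frontier Ω, u₀ ≤ u x) :
    ∃ κ > 0, ∀ c ∈ Ω, κ * infDist c Ωᶜ ^ 2 ≤ u c - u₀ := by
  have hd : (0 : ℝ) < Module.finrank ℝ E := mod_cast Module.finrank_pos
  refine ⟨(4 * Module.finrank ℝ E : ℝ)⁻¹, by positivity, fun c hc => ?_⟩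
  refine hsol.mul_sq_infDist_le hΩo hΩb hu hcrit hbc (by positivity) (fun y _ => ?_) hc
  field_simp
  norm_num

theorem IsLevelSetSolution.concaveOn_sub_rpow [Nontrivial E]
    (hsol : IsLevelSetSolution Ω (fun _ => 1) u) (hΩo : IsOpen Ω) (hΩc : Convex ℝ Ω)
    (hΩb : IsBounded Ω) (hu : ContinuousOn u (closure Ω))
    (hcrit : {x ∈ Ω | ∇ u x = 0}.Subsingleton) (hbc : ∀ x ∈ frontier Ω, u x = u₀)
    (hα : 0 < α) (hα₂ : α < 1 / 2) : ConcaveOn ℝ (closure Ω) (fun x => (u x - u₀) ^ α) := by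
  obtain ⟨κ, hκ, hgrowth⟩ :=
    hsol.exists_mul_sq_infDist_le hΩo hΩb hu hcrit fun x hx => (hbc x hx).ge
  have hΩ' : Ωᶜ.Nonempty := nonempty_compl.2 fun hΩ => NormedSpace.unbounded_univ ℝ E (hΩ ▸ hΩb)
  have hpos : MapsTo u Ω (Ioi u₀) := fun x hx => by
    have := (hΩo.isClosed_compl.notMem_iff_infDist_pos hΩ').1 (not_not.2 hx)
    exact sub_pos.1 (lt_of_lt_of_le (by positivity) (hgrowth x hx))
  have hw := hsol.sub_rpow hΩo hpos hα
  have hwcrit : {x ∈ Ω | ∇ (fun x => (u x - u₀) ^ α) x = 0}.Subsingleton :=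
    hcrit.anti fun x ⟨hx, hgrad⟩ => ⟨hx, (gradient_comp_eq_zero_iff (hsol.differentiableAt x hx)
      (hasDerivAt_sub_rpow (hpos hx) α)
      (mul_pos hα (Real.rpow_pos_of_pos (sub_pos.2 (hpos hx)) _)).ne').1 hgrad⟩
  have hexp : 1 ≤ α⁻¹ - 1 := by
    have := (lt_inv_comm₀ two_pos hα).2 (by simpa using hα₂)
    linarith
  have hmono : StrictMonoOn (fun t : ℝ => t ^ (α⁻¹ - 1)) (Ioi 0) :=
    (Real.strictMonoOn_rpow_Ici_of_exponent_pos (one_pos.trans_le hexp)).mono Ioi_subset_Ici_self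
  refine hw.concaveOn_closure hΩo hΩc hΩb
    ((hu.sub continuousOn_const).rpow_const fun _ _ => .inr hα.le) hwcrit
    (fun x hx => by simp [hbc x hx, hα.ne']) (fun x hx => ?_)
    (fun x hx => Real.rpow_pos_of_pos (sub_pos.2 (hpos hx)) α)
    (((convexOn_rpow hexp).subset Ioi_subset_Ici_self (convex_Ioi 0)).smul (inv_pos.2 hα).le)
    (fun s hs t ht hst => mul_lt_mul_of_pos_left (hmono hs ht hst) (inv_pos.2 hα))
    (fun t ht => mul_pos (inv_pos.2 hα) (Real.rpow_pos_of_pos ht _))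
  obtain ⟨c, hc⟩ : Ω.Nonempty := closure_nonempty_iff.1 ⟨x, frontier_subset_closure hx⟩
  exact hasInfiniteInnerSlope_rpow_of_mul_sq_infDist_le hΩo hΩc hκ hgrowth hα hα₂ hx
    (sub_eq_zero.2 (hbc x hx)) hc

end Powers

theorem stmt15_general {E : Type*} [NormedAddCommGroup E] [InnerProductSpace ℝ E]
    [FiniteDimensional ℝ E] [Nontrivial E] {Ω : Set E} (hΩo : IsOpen Ω) (hΩc : Convex ℝ Ω)
    (hΩb : IsBounded Ω) {u : E → ℝ} {u₀ : ℝ} (hu : ContinuousOn u (closure Ω))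
    (hsol : IsLevelSetSolution Ω (fun _ => 1) u) (hcrit : {x ∈ Ω | ∇ u x = 0}.Subsingleton)
    (hbc : ∀ x ∈ frontier Ω, u x = u₀) :
    ConcaveOn ℝ (closure Ω) (fun x => √(2 * (u x - u₀))) := by
  have hhalf : ConcaveOn ℝ (closure Ω) (fun x => (u x - u₀) ^ (1 / 2 : ℝ)) := by
    have hlim : Tendsto (fun (α : ℝ) x => (u x - u₀) ^ α) (𝓝[<] (1 / 2))
        (𝓝 fun x => (u x - u₀) ^ (1 / 2 : ℝ)) := by
      refine tendsto_pi_nhds.2 fun x => ?_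
      exact (Real.continuousAt_const_rpow' (by norm_num)).tendsto.mono_left nhdsWithin_le_nhds
    refine isClosed_setOfPred_concaveOn.mem_of_tendsto hlim ?_
    filter_upwards [Ioo_mem_nhdsLT (show (0 : ℝ) < 1 / 2 by norm_num)] with α hα
    exact hsol.concaveOn_sub_rpow hΩo hΩc hΩb hu hcrit hbc hα.1 hα.2
  refine (hhalf.smul (Real.sqrt_nonneg 2)).congr fun x _ => ?_
  simp only [Real.sqrt_mul zero_le_two, Real.sqrt_eq_rpow (u x - u₀), smul_eq_mul]

end

/-- Concavity of the square root of the arrival time of mean curvature flow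
(Theorem 2, first part): if `u ∈ C¹(Ω̄)` has a single critical point `p`, is
twice differentiable in `Ω \ {p}`, satisfies the level set flow equation
`-|Du| div(Du/|Du|) = 1` there and `u ≡ u₀` on `∂Ω`, then `√(2(u-u₀))` is
concave. -/
theorem stmt15 {n : ℕ}
    (Ω : Set (EuclideanSpace ℝ (Fin (n + 1))))
    (hΩo : IsOpen Ω) (hΩc : Convex ℝ Ω) (hΩb : IsBounded Ω)
    -- smooth boundary
    (hsb : ∃ f : EuclideanSpace ℝ (Fin (n + 1)) → ℝ, ContDiff ℝ (⊤ : ℕ∞) f ∧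
      Ω = {x | f x < 0} ∧ ∀ x ∈ frontier Ω, fderiv ℝ f x ≠ 0)
    (u : EuclideanSpace ℝ (Fin (n + 1)) → ℝ) (u₀ : ℝ)
    (hu : ContDiffOn ℝ 1 u (closure Ω))
    (hud : ∀ x ∈ Ω, DifferentiableAt ℝ u x)
    (p : EuclideanSpace ℝ (Fin (n + 1))) (hp : p ∈ Ω)
    -- `p` is the unique critical point of `u` in `Ω`
    (hcrit : ∀ x ∈ Ω, (gradient u x = 0 ↔ x = p))
    -- `u` is twice differentiable in `Ω \ {p}`
    (hud2 : ∀ x ∈ Ω \ {p}, DifferentiableAt ℝ (fun y => fderiv ℝ u y) x)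
    -- the level set mean curvature flow equation in `Ω \ {p}`
    (heq : ∀ x ∈ Ω \ {p},
      -(∑ i, ∑ j,
        ((if i = j then (1:ℝ) else 0)
            - fderiv ℝ u x (EuclideanSpace.single i 1)
              * fderiv ℝ u x (EuclideanSpace.single j 1) / ‖gradient u x‖ ^ 2)
          * fderiv ℝ (fun y => fderiv ℝ u y (EuclideanSpace.single j 1)) x
              (EuclideanSpace.single i 1)) = 1)
    -- boundary condition
    (hbc : ∀ x ∈ frontier Ω, u x = u₀) :
    ConcaveOn ℝ (closure Ω) (fun x => Real.sqrt (2 * (u x - u₀))) := by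
  have hmem (x) (hx : x ∈ Ω) (hgrad : gradient u x ≠ 0) : x ∈ Ω \ {p} :=
    ⟨hx, fun hxp => hgrad ((hcrit x hx).2 hxp)⟩
  refine stmt15_general hΩo hΩc hΩb hu.continuousOn ?_ ?_ hbc
  · exact isLevelSetSolution_of_sum_sum (EuclideanSpace.basisFun _ ℝ) hud
      (fun x hx hgrad => hud2 x (hmem x hx hgrad))
      fun x hx hgrad => by simpa using heq x (hmem x hx hgrad)
  · exact fun x hx y hy => ((hcrit x hx.1).1 hx.2).trans ((hcrit y hy.1).1 hy.2).symm
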